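/- Let n ≥ 2 and let (M,g) = (ℝ^n, g) with reference point o be an asymptotically conical Riemannian manifold with opening angle α ∈ (0,π/2) and asymptotic decay rate μ > 0, and let d_g denote the induced Riemannian distance. Then lim_{|x|→∞} d_g(o,x)/|x| = 1; equivalently, d_g(o,x)/|x| → 1 as d_g(o,x) → ∞. -/

import Mathlib

open scoped RealInnerProductSpace
open Real Set Filter

noncomputable section

/-- Euclidean `n`-space. -/
abbrev En (n : ℕ) : Type := EuclideanSpace ℝ (Fin n)

/-- A (pointwise) metric tensor on `ℝⁿ`: to each point it assigns a bilinear form,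
recorded simply as an `ℝ`-valued function of two tangent vectors (tangent spaces being
identified with `ℝⁿ`). -/
abbrev MetricTensor (n : ℕ) : Type := En n → En n → En n → ℝ

/-- The standard cone metric `g_{C_α^n}` of opening angle `α`, written in Cartesian
coordinates on `ℝⁿ \ {0}`:  `g_{C_α^n} = (1 - sin²α)·dρ⊗dρ + sin²α·(euclidean metric)`,
where `dρ(v) = ⟪v, x/‖x‖⟫`; this is `dρ⊗dρ + ρ² sin²α · g_{S^{n-1}}` in polar
coordinates. -/
def coneMetric (n : ℕ) (α : ℝ) : MetricTensor n := fun x v w =>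
  (1 - Real.sin α ^ 2) * (⟪v, x⟫ * ⟪w, x⟫ / ‖x‖ ^ 2) + Real.sin α ^ 2 * ⟪v, w⟫

variable {n : ℕ}

/-- Length of a curve on `[a,b]` with respect to a metric tensor. -/
def clen (G : MetricTensor n) (γ : ℝ → En n) (a b : ℝ) : ℝ :=
  ∫ t in a..b, Real.sqrt (G (γ t) (deriv γ t) (deriv γ t))

/-- Energy of a curve on `[a,b]` with respect to a metric tensor. -/
def cenergy (G : MetricTensor n) (γ : ℝ → En n) (a b : ℝ) : ℝ :=
  ∫ t in a..b, G (γ t) (deriv γ t) (deriv γ t)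

/-- The Riemannian (length) distance induced by a metric tensor:
the infimum of lengths of `C¹` curves joining the two points. -/
def rdist (G : MetricTensor n) (x y : En n) : ℝ :=
  sInf {L : ℝ | ∃ γ : ℝ → En n, ContDiff ℝ 1 γ ∧ γ 0 = x ∧ γ 1 = y ∧ L = clen G γ 0 1}

/-- The intrinsic (induced length) distance of the subset `S` for the metric tensor `G`:
the infimum of lengths of `C¹` curves joining the two points inside `S`. -/
def rdistIn (G : MetricTensor n) (S : Set (En n)) (x y : En n) : ℝ :=
  sInf {L : ℝ | ∃ γ : ℝ → En n, ContDiff ℝ 1 γ ∧ (∀ t ∈ Set.Icc (0:ℝ) 1, γ t ∈ S) ∧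
    γ 0 = x ∧ γ 1 = y ∧ L = clen G γ 0 1}

/-- `γ`, restricted to the parameter set `I`, is a geodesic of the distance `d` with
constant speed `c`: locally it is a homothety of factor `c` (for `c = 1` this is a local
isometry, i.e. the arc-length parametrisation). -/
def IsGeodesicOn (d : En n → En n → ℝ) (γ : ℝ → En n) (c : ℝ) (I : Set ℝ) : Prop :=
  ∀ t ∈ I, ∃ δ > 0, ∀ s ∈ I, ∀ u ∈ I, |s - t| < δ → |u - t| < δ →
    d (γ s) (γ u) = c * |s - u|

/-- A length-minimising geodesic segment from `p` to `q`, parametrised on `[0,1]`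
with constant speed `d p q`. -/
def IsMinSeg (d : En n → En n → ℝ) (γ : ℝ → En n) (p q : En n) : Prop :=
  γ 0 = p ∧ γ 1 = q ∧
    ∀ s ∈ Set.Icc (0:ℝ) 1, ∀ u ∈ Set.Icc (0:ℝ) 1, d (γ s) (γ u) = d p q * |s - u|

/-- The distance of the standard cone `C_α^n`. -/
def coneDist (n : ℕ) (α : ℝ) : En n → En n → ℝ := rdist (coneMetric n α)

/-- `(ℝⁿ, g)` is an asymptotically conical `C²` Riemannian manifold with opening
angle `α` and asymptotic decay rate `μ`: `g` is a complete `C²` Riemannian metric and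
`A := g - g_{C_α^n}` has components whose derivatives of order `k ≤ 2` are
`O(|x|^{-μ-k})` at infinity. -/
structure IsAsympConical (n : ℕ) (g : MetricTensor n) (α μ : ℝ) : Prop where
  symm : ∀ x v w, g x v w = g x w v
  add_left : ∀ x v w u, g x (v + w) u = g x v u + g x w u
  smul_left : ∀ x (a : ℝ) v u, g x (a • v) u = a * g x v u
  posdef : ∀ x v, v ≠ 0 → 0 < g x v v
  reg : ∀ i j : Fin n, ContDiff ℝ 2
    (fun x => g x (EuclideanSpace.single i 1) (EuclideanSpace.single j 1))
  decay : ∀ i j : Fin n, ∃ C R : ℝ, 0 < C ∧ ∀ x : En n, R ≤ ‖x‖ → ∀ k : ℕ, k ≤ 2 →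
    ‖iteratedFDeriv ℝ k (fun y =>
        g y (EuclideanSpace.single i 1) (EuclideanSpace.single j 1) -
        coneMetric n α y (EuclideanSpace.single i 1) (EuclideanSpace.single j 1)) x‖ ≤
      C * ‖x‖ ^ (-μ - (k : ℝ))
  complete : ∀ u : ℕ → En n,
    (∀ ε > 0, ∃ N, ∀ m ≥ N, ∀ k ≥ N, rdist g (u m) (u k) < ε) →
    ∃ x, ∀ ε > 0, ∃ N, ∀ m ≥ N, rdist g (u m) x < ε

/-- `ex` is the exponential map of the metric tensor `g` at the point `x`
(tangent spaces being identified with `ℝⁿ`): `ex v = γ_v(1)` where `γ_v` is the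
constant-speed geodesic with `γ_v(0) = x`, `γ̇_v(0) = v`. -/
def IsExpAt (g : MetricTensor n) (x : En n) (ex : En n → En n) : Prop :=
  ∀ v : En n, ∃ γ : ℝ → En n, γ 0 = x ∧ deriv γ 0 = v ∧
    IsGeodesicOn (rdist g) γ (Real.sqrt (g x v v)) Set.univ ∧ ex v = γ 1

/-- The exponential map of `g` exists and is proper at every point: preimages of
compact sets are compact. -/
def ProperExpAll (g : MetricTensor n) : Prop :=
  ∀ x : En n, ∃ ex : En n → En n, IsExpAt g x ex ∧
    ∀ K : Set (En n), IsCompact K → IsCompact (ex ⁻¹' K)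

/-- Second variation of the energy of `γ` on `[a,b]` along the variation field `V`
(using the global chart to form the variation `γ + s·V`). -/
def secondVar (g : MetricTensor n) (γ V : ℝ → En n) (a b : ℝ) : ℝ :=
  iteratedDeriv 2 (fun s : ℝ => cenergy g (fun t => γ t + s • V t) a b) 0

/-- The Morse index of `γ` on `[a,b]`, as a critical point of the energy, is at most
`m`: every linear space of `C¹` variation fields vanishing at the endpoints on which the
second variation of the energy is negative definite has dimension at most `m`. -/
def MorseIndexLEOn (g : MetricTensor n) (γ : ℝ → En n) (a b : ℝ) (m : ℕ) : Prop :=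
  ∀ W : Submodule ℝ (ℝ → En n),
    (∀ V ∈ W, ContDiff ℝ 1 V ∧ V a = 0 ∧ V b = 0) →
    (∀ V ∈ W, V ≠ 0 → secondVar g γ V a b < 0) →
    Module.rank ℝ W ≤ (m : Cardinal)

end

/-!
Only the values `g x v v` enter the length of a curve, and `x ↦ g x v v` is asymptotic to the cone
metric uniformly in the direction `v`.

*Upper bound.* The cone metric is Euclidean in radial directions, so along the segment `t ↦ t x` the
ratio of the `g`-speed to `‖x‖` tends to `1` for every `t > 0` and is uniformly bounded. By
dominated convergence the length of the segment is asymptotic to `‖x‖`.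

*Lower bound.* The cone metric dominates `dρ²`, and since `sin α ≠ 0` it also dominates a multiple
of the Euclidean metric. Hence for each `c < 1` the `g`-speed is at least `c` times the radial speed
outside a ball of some radius `R`. After the last time a curve from `0` to `x` is in that ball, its
length is at least `c (‖x‖ - R)`.

The upper bound also gives `d_g(0, x) ≤ K ‖x‖`, so `d_g(0, x) → ∞` forces `‖x‖ → ∞`.
-/

open MeasureTheory Bornology
open scoped Topology

section Preliminaries

variable {E : Type*} [NormedAddCommGroup E] [InnerProductSpace ℝ E]

lemma abs_bilin_apply_le {ι : Type*} [Fintype ι] (b : OrthonormalBasis ι ℝ E)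
    (B : E →ₗ[ℝ] E →ₗ[ℝ] ℝ) (v w : E) :
    |B v w| ≤ (∑ i, ∑ j, |B (b i) (b j)|) * (‖v‖ * ‖w‖) := by
  have hcoord (u : E) (i : ι) : |b.repr u i| ≤ ‖u‖ := by
    simpa using PiLp.norm_apply_le (b.repr u) i
  calc |B v w| = |∑ i, ∑ j, b.repr v i * (b.repr w j * B (b i) (b j))| := by
        rw [← LinearMap.sum_repr_mul_repr_mul b.toBasis b.toBasis v w]
        simp [Finsupp.sum_fintype]
    _ ≤ ∑ i, ∑ j, |b.repr v i * (b.repr w j * B (b i) (b j))| :=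
        (Finset.abs_sum_le_sum_abs _ _).trans
          (Finset.sum_le_sum fun i _ => Finset.abs_sum_le_sum_abs _ _)
    _ ≤ ∑ i, ∑ j, |B (b i) (b j)| * (‖v‖ * ‖w‖) := by
        gcongr with i _ j
        rw [abs_mul, abs_mul, ← mul_assoc, mul_comm]
        gcongr <;> apply hcoord
    _ = (∑ i, ∑ j, |B (b i) (b j)|) * (‖v‖ * ‖w‖) := by simp only [Finset.sum_mul]

lemma sq_inner_div_norm_le (x v : E) : (⟪x, v⟫ / ‖x‖) ^ 2 ≤ ‖v‖ ^ 2 := by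
  rw [sq_le_sq, abs_div, abs_norm, abs_norm]
  exact div_le_of_le_mul₀ (norm_nonneg x) (norm_nonneg v)
    ((abs_real_inner_le_norm x v).trans_eq (mul_comm _ _))

lemma hasDerivAt_norm_comp {γ : ℝ → E} {γ' : E} {t : ℝ} (hγ : HasDerivAt γ γ' t) (h0 : γ t ≠ 0) :
    HasDerivAt (fun s => ‖γ s‖) (⟪γ t, γ'⟫ / ‖γ t‖) t := by
  have h := hγ.norm_sq.sqrt (by positivity)
  simp only [sqrt_sq (norm_nonneg _)] at h
  exact h.congr_deriv (mul_div_mul_left _ _ two_ne_zero)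

lemma exists_last_le {X Y : Type*} [ConditionallyCompleteLinearOrder X] [TopologicalSpace X]
    [OrderTopology X] [LinearOrder Y] [TopologicalSpace Y] [ClosedIicTopology Y] {f : X → Y}
    {a b : X} {r : Y} (hf : ContinuousOn f (Icc a b)) (hab : a ≤ b) (ha : f a ≤ r) :
    ∃ s ∈ Icc a b, f s ≤ r ∧ ∀ t ∈ Ioc s b, r < f t := by
  have hcompact : IsCompact (Icc a b ∩ f ⁻¹' Iic r) :=
    isCompact_Icc.of_isClosed_subset
      (hf.preimage_isClosed_of_isClosed isClosed_Icc isClosed_Iic) inter_subset_left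
  obtain ⟨s, ⟨hs, hsr⟩, hlast⟩ := hcompact.exists_isGreatest ⟨a, left_mem_Icc.2 hab, ha⟩
  refine ⟨s, hs, hsr, fun t ht => ?_⟩
  by_contra! htr
  exact ht.1.not_ge (hlast ⟨⟨hs.1.trans ht.1.le, ht.2⟩, htr⟩)

lemma tendsto_const_smul_cobounded {𝕜 F : Type*} [NormedField 𝕜] [NormedAddCommGroup F]
    [NormedSpace 𝕜 F] {c : 𝕜} (hc : c ≠ 0) :
    Tendsto (fun x : F => c • x) (cobounded F) (cobounded F) := by
  rw [← tendsto_norm_atTop_iff_cobounded]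
  simpa only [norm_smul] using
    tendsto_norm_cobounded_atTop.const_mul_atTop (norm_pos_iff.2 hc)

lemma tendsto_comap_atTop_nhds_iff {X Y M : Type*} [SemilatticeSup Y] [Nonempty Y]
    [PseudoMetricSpace M] {f : X → M} {φ : X → Y} {a : M} :
    Tendsto f (comap φ atTop) (𝓝 a) ↔ ∀ ε > 0, ∃ R, ∀ x, R ≤ φ x → dist (f x) a < ε := by
  simp [(atTop_basis.comap φ).tendsto_iff Metric.nhds_basis_ball]

end Preliminaries

section AsympConical

variable {n : ℕ} {g : MetricTensor n} {α μ : ℝ}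

/-- A continuous Finsler structure on `ℝⁿ` asymptotic to the cone of opening angle `α`, encoded by
its squared norms `g x v v`; it is what the asymptotics of the distance depend on. The off-diagonal
values of `g` are arbitrary and the norms need not be convex or definite, but `nonneg` is imposed
because `√(g x v v)` would be a junk value otherwise. -/
structure IsAsympConicalFinsler (g : MetricTensor n) (α : ℝ) : Prop where
  nonneg : ∀ x v, 0 ≤ g x v v
  apply_smul_smul : ∀ x (a : ℝ) v, g x (a • v) (a • v) = a ^ 2 * g x v v
  continuous : Continuous fun p : En n × En n => g p.1 p.2 p.2
  asymp : ∀ δ > 0, ∀ᶠ x in cobounded (En n), ∀ v,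
    |g x v v - coneMetric n α x v v| ≤ δ * ‖v‖ ^ 2

lemma isBilinearMap_coneMetric (α : ℝ) (x : En n) : IsBilinearMap ℝ (coneMetric n α x) where
  add_left v w u := by simp only [coneMetric, inner_add_left]; ring
  smul_left a v u := by simp only [coneMetric, real_inner_smul_left, smul_eq_mul]; ring
  add_right v w u := by simp only [coneMetric, inner_add_left, inner_add_right]; ring
  smul_right a v u := by
    simp only [coneMetric, real_inner_smul_left, real_inner_smul_right, smul_eq_mul]; ring

namespace IsAsympConical

lemma isBilinearMap (hg : IsAsympConical n g α μ) (x : En n) : IsBilinearMap ℝ (g x) where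
  add_left := hg.add_left x
  smul_left := hg.smul_left x
  add_right v w u := by simp only [hg.symm x v, hg.add_left]
  smul_right a v u := by simp only [hg.symm x v, hg.smul_left, smul_eq_mul]

lemma continuous_self (hg : IsAsympConical n g α μ) :
    Continuous fun p : En n × En n => g p.1 p.2 p.2 := by
  let b := EuclideanSpace.basisFun (Fin n) ℝ
  have hsum (p : En n × En n) : g p.1 p.2 p.2 =
      ∑ i, ∑ j, p.2 i *
        (p.2 j * g p.1 (EuclideanSpace.single i 1) (EuclideanSpace.single j 1)) := by
    have := LinearMap.sum_repr_mul_repr_mul b.toBasis b.toBasis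
      (B := (hg.isBilinearMap p.1).toLinearMap) p.2 p.2
    simpa [Finsupp.sum_fintype, b, IsBilinearMap.toLinearMap] using this.symm
  simp only [hsum]
  have hcomp (i j : Fin n) := (hg.reg i j).continuous
  fun_prop

lemma tendsto_component_sub (hg : IsAsympConical n g α μ) (hμ : 0 < μ) (i j : Fin n) :
    Tendsto (fun x => g x (EuclideanSpace.single i 1) (EuclideanSpace.single j 1) -
      coneMetric n α x (EuclideanSpace.single i 1) (EuclideanSpace.single j 1))
      (cobounded (En n)) (𝓝 0) := by
  obtain ⟨C, R, -, hdecay⟩ := hg.decay i j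
  have hrpow : Tendsto (fun x : En n => C * ‖x‖ ^ (-μ)) (cobounded (En n)) (𝓝 0) := by
    simpa using ((tendsto_rpow_neg_atTop hμ).comp tendsto_norm_cobounded_atTop).const_mul C
  refine squeeze_zero_norm' ?_ hrpow
  filter_upwards [eventually_cobounded_le_norm R] with x hx
  simpa using hdecay x hx 0 (Nat.zero_le 2)

lemma asymp (hg : IsAsympConical n g α μ) (hμ : 0 < μ) {δ : ℝ} (hδ : 0 < δ) :
    ∀ᶠ x in cobounded (En n), ∀ v, |g x v v - coneMetric n α x v v| ≤ δ * ‖v‖ ^ 2 := by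
  let b := EuclideanSpace.basisFun (Fin n) ℝ
  have hsum : Tendsto (fun x => ∑ i, ∑ j, |g x (b i) (b j) - coneMetric n α x (b i) (b j)|)
      (cobounded (En n)) (𝓝 0) := by
    simpa [b] using tendsto_finsetSum Finset.univ fun i _ =>
      tendsto_finsetSum Finset.univ fun j _ => (hg.tendsto_component_sub hμ i j).abs
  filter_upwards [hsum.eventually_le_const hδ] with x hx v
  calc |g x v v - coneMetric n α x v v|
      ≤ (∑ i, ∑ j, |g x (b i) (b j) - coneMetric n α x (b i) (b j)|) * (‖v‖ * ‖v‖) :=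
        abs_bilin_apply_le b ((hg.isBilinearMap x).toLinearMap -
          (isBilinearMap_coneMetric α x).toLinearMap) v v
    _ ≤ δ * ‖v‖ ^ 2 := by rw [← sq]; gcongr

lemma isAsympConicalFinsler (hg : IsAsympConical n g α μ) (hμ : 0 < μ) :
    IsAsympConicalFinsler g α where
  nonneg x v := by
    rcases eq_or_ne v 0 with rfl | hv
    · exact ((hg.isBilinearMap x).toLinearMap.map_zero₂ 0).ge
    · exact (hg.posdef x v hv).le
  apply_smul_smul x a v := by rw [hg.smul_left, hg.symm, hg.smul_left]; ring
  continuous := hg.continuous_self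
  asymp _ := hg.asymp hμ

end IsAsympConical

/-! ### Size of the cone metric -/

lemma coneMetric_self (α : ℝ) (x v : En n) :
    coneMetric n α x v v = (⟪x, v⟫ / ‖x‖) ^ 2 + sin α ^ 2 * (‖v‖ ^ 2 - (⟪x, v⟫ / ‖x‖) ^ 2) := by
  simp only [coneMetric, real_inner_self_eq_norm_sq, real_inner_comm x v]
  ring

lemma sq_inner_div_norm_le_coneMetric (α : ℝ) (x v : En n) :
    (⟪x, v⟫ / ‖x‖) ^ 2 ≤ coneMetric n α x v v := by
  rw [coneMetric_self]
  have := mul_nonneg (sq_nonneg (sin α)) (sub_nonneg.2 (sq_inner_div_norm_le x v))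
  linarith

lemma sq_sin_mul_sq_norm_le_coneMetric (α : ℝ) (x v : En n) :
    sin α ^ 2 * ‖v‖ ^ 2 ≤ coneMetric n α x v v := by
  rw [coneMetric_self]
  have := mul_nonneg (sq_nonneg (⟪x, v⟫ / ‖x‖)) (sub_nonneg.2 (sin_sq_le_one α))
  linarith

lemma coneMetric_le_sq_norm (α : ℝ) (x v : En n) : coneMetric n α x v v ≤ ‖v‖ ^ 2 := by
  rw [coneMetric_self]
  have := mul_le_of_le_one_left (sub_nonneg.2 (sq_inner_div_norm_le x v)) (sin_sq_le_one α)
  linarith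

lemma coneMetric_smul_self (α : ℝ) {t : ℝ} (ht : t ≠ 0) (x : En n) :
    coneMetric n α (t • x) x x = ‖x‖ ^ 2 := by
  have hradial : (⟪t • x, x⟫ / ‖t • x‖) ^ 2 = ‖x‖ ^ 2 := by
    rw [real_inner_smul_left, real_inner_self_eq_norm_sq, norm_smul, Real.norm_eq_abs, div_pow,
      mul_pow, mul_pow, sq_abs, mul_div_mul_left _ _ (pow_ne_zero 2 ht), ← div_pow, sq ‖x‖,
      mul_self_div_self, sq]
  rw [coneMetric_self, hradial, sub_self, mul_zero, add_zero]

/-! ### Finsler norms asymptotic to a cone -/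

namespace IsAsympConicalFinsler

lemma exists_le_mul_sq_norm (hg : IsAsympConicalFinsler g α) :
    ∃ K, ∀ x v, g x v v ≤ K * ‖v‖ ^ 2 := by
  obtain ⟨R, -, hfar⟩ := hasBasis_cobounded_norm.eventually_iff.1 (hg.asymp 1 one_pos)
  obtain ⟨M, hM⟩ := ((isCompact_closedBall (0 : En n) R).prod
    (isCompact_closedBall (0 : En n) 1)).bddAbove_image hg.continuous.continuousOn
  refine ⟨max M 2, fun x v => ?_⟩
  rcases le_total R ‖x‖ with hx | hx
  · calc g x v v ≤ 2 * ‖v‖ ^ 2 := by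
          linarith [(abs_le.1 (hfar hx v)).2, coneMetric_le_sq_norm α x v]
      _ ≤ max M 2 * ‖v‖ ^ 2 := by gcongr; exact le_max_right _ _
  · set u := ‖v‖⁻¹ • v
    have hv : v = ‖v‖ • u := by
      rcases eq_or_ne v 0 with rfl | hv
      · simp
      · exact (smul_inv_smul₀ (norm_ne_zero_iff.2 hv) v).symm
    have hu : ‖u‖ ≤ 1 := by
      rw [norm_smul, norm_inv, norm_norm]
      exact inv_mul_le_one
    calc g x v v = g x u u * ‖v‖ ^ 2 := by
          conv_lhs => rw [hv, hg.apply_smul_smul, mul_comm]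
      _ ≤ max M 2 * ‖v‖ ^ 2 := by
          gcongr
          exact (hM ⟨(x, u), by simp [hx, hu], rfl⟩).trans (le_max_left _ _)

lemma exists_sqrt_le_mul_norm (hg : IsAsympConicalFinsler g α) :
    ∃ K, ∀ x v, √(g x v v) ≤ K * ‖v‖ := by
  obtain ⟨K, hK⟩ := hg.exists_le_mul_sq_norm
  refine ⟨√K, fun x v => (sqrt_le_sqrt (hK x v)).trans_eq ?_⟩
  rw [sqrt_mul' _ (sq_nonneg _), sqrt_sq (norm_nonneg v)]

lemma tendsto_sqrt_radial_div_norm (hg : IsAsympConicalFinsler g α) {t : ℝ} (ht : t ≠ 0) :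
    Tendsto (fun x => √(g (t • x) x x) / ‖x‖) (cobounded (En n)) (𝓝 1) := by
  have hsq : Tendsto (fun x => g (t • x) x x / ‖x‖ ^ 2) (cobounded (En n)) (𝓝 1) := by
    refine Metric.nhds_basis_closedBall.tendsto_right_iff.2 fun δ hδ => ?_
    filter_upwards [(tendsto_const_smul_cobounded ht).eventually (hg.asymp δ hδ),
      eventually_cobounded_le_norm 1] with x hx hx₁
    have hpos : 0 < ‖x‖ ^ 2 := by positivity
    rw [Metric.mem_closedBall, Real.dist_eq, div_sub_one hpos.ne', abs_div, abs_of_pos hpos,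
      div_le_iff₀ hpos]
    simpa only [coneMetric_smul_self α ht] using hx x
  simpa only [sqrt_one, sqrt_div' _ (sq_nonneg _), sqrt_sq (norm_nonneg _)] using hsq.sqrt

lemma eventually_mul_coneMetric_le (hg : IsAsympConicalFinsler g α) (hα : sin α ≠ 0) {c : ℝ}
    (hc : c < 1) : ∀ᶠ x in cobounded (En n), ∀ v, c * coneMetric n α x v v ≤ g x v v := by
  have hδ : 0 < (1 - c) * sin α ^ 2 := mul_pos (sub_pos.2 hc) (by positivity)
  filter_upwards [hg.asymp _ hδ] with x hx v
  have hcone := mul_le_mul_of_nonneg_left (sq_sin_mul_sq_norm_le_coneMetric α x v)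
    (sub_nonneg.2 hc.le)
  linarith [(abs_le.1 (hx v)).1]

lemma eventually_mul_radial_le_sqrt (hg : IsAsympConicalFinsler g α) (hα : sin α ≠ 0) {c : ℝ}
    (hc₀ : 0 ≤ c) (hc₁ : c < 1) :
    ∀ᶠ x in cobounded (En n), ∀ v, c * (⟪x, v⟫ / ‖x‖) ≤ √(g x v v) := by
  have hc : c ^ 2 < 1 := pow_lt_one₀ hc₀ hc₁ two_ne_zero
  filter_upwards [hg.eventually_mul_coneMetric_le hα hc] with x hx v
  refine le_sqrt_of_sq_le ?_
  calc (c * (⟪x, v⟫ / ‖x‖)) ^ 2 = c ^ 2 * (⟪x, v⟫ / ‖x‖) ^ 2 := mul_pow _ _ _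
    _ ≤ c ^ 2 * coneMetric n α x v v := by gcongr; exact sq_inner_div_norm_le_coneMetric α x v
    _ ≤ g x v v := hx v

end IsAsympConicalFinsler

/-! ### Lengths and distances -/

lemma continuous_speed (hg : Continuous fun p : En n × En n => g p.1 p.2 p.2) {γ : ℝ → En n}
    (hγ : ContDiff ℝ 1 γ) : Continuous fun t => √(g (γ t) (deriv γ t) (deriv γ t)) :=
  (hg.comp (hγ.continuous.prodMk (hγ.continuous_deriv le_rfl))).sqrt

lemma continuous_sqrt_radial (hg : Continuous fun p : En n × En n => g p.1 p.2 p.2) (x : En n) :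
    Continuous fun t : ℝ => √(g (t • x) x x) :=
  (hg.comp (f := fun t : ℝ => (t • x, x)) (by fun_prop)).sqrt

lemma rdist_le_clen {γ : ℝ → En n} (hγ : ContDiff ℝ 1 γ) : rdist g (γ 0) (γ 1) ≤ clen g γ 0 1 := by
  refine csInf_le ⟨0, ?_⟩ ⟨γ, hγ, rfl, rfl, rfl⟩
  rintro _ ⟨γ, -, -, -, rfl⟩
  exact intervalIntegral.integral_nonneg zero_le_one fun _ _ => sqrt_nonneg _

lemma rdist_zero_le_integral_radial (g : MetricTensor n) (x : En n) :
    rdist g 0 x ≤ ∫ t in (0 : ℝ)..1, √(g (t • x) x x) := by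
  have hderiv (t : ℝ) : deriv (fun t : ℝ => t • x) t = x := by
    simpa using ((hasDerivAt_id t).smul_const x).deriv
  simpa [clen, hderiv] using rdist_le_clen (g := g) (γ := fun t => t • x) (by fun_prop)

section LowerBound

variable {c R : ℝ} {γ : ℝ → En n}

lemma mul_norm_sub_norm_le_clen (hg : Continuous fun p : En n × En n => g p.1 p.2 p.2)
    (hR : 0 ≤ R) (hradial : ∀ x, R ≤ ‖x‖ → ∀ v, c * (⟪x, v⟫ / ‖x‖) ≤ √(g x v v))
    (hγ : ContDiff ℝ 1 γ) {a b : ℝ} (hab : a ≤ b) (hout : ∀ t ∈ Ioo a b, R < ‖γ t‖) :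
    c * (‖γ b‖ - ‖γ a‖) ≤ clen g γ a b := by
  have hspeed := (continuous_speed hg hγ).integrableOn_Icc (a := a) (b := b) (μ := volume)
  rw [mul_sub]
  refine intervalIntegral.sub_le_integral_of_hasDeriv_right_of_le hab
    (hγ.continuous.norm.const_mul c).continuousOn (fun t ht => ?_) hspeed
    fun t ht => hradial _ (hout t ht).le _
  have hne : γ t ≠ 0 := norm_pos_iff.1 (hR.trans_lt (hout t ht))
  exact ((hasDerivAt_norm_comp (hγ.differentiable one_ne_zero t).hasDerivAt hne).const_mul
    c).hasDerivWithinAt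

lemma mul_norm_sub_le_clen (hg : Continuous fun p : En n × En n => g p.1 p.2 p.2)
    (hc : 0 ≤ c) (hradial : ∀ x, R ≤ ‖x‖ → ∀ v, c * (⟪x, v⟫ / ‖x‖) ≤ √(g x v v))
    (hγ : ContDiff ℝ 1 γ) {a b : ℝ} (hab : a ≤ b) (ha : ‖γ a‖ ≤ R) :
    c * (‖γ b‖ - R) ≤ clen g γ a b := by
  obtain ⟨s, hs, hsR, hout⟩ := exists_last_le hγ.continuous.norm.continuousOn hab ha
  have hspeed := continuous_speed hg hγ
  calc c * (‖γ b‖ - R) ≤ c * (‖γ b‖ - ‖γ s‖) := by gcongr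
    _ ≤ clen g γ s b := mul_norm_sub_norm_le_clen hg ((norm_nonneg _).trans ha) hradial hγ hs.2
        fun t ht => hout t (Ioo_subset_Ioc_self ht)
    _ ≤ clen g γ a s + clen g γ s b :=
        le_add_of_nonneg_left (intervalIntegral.integral_nonneg hs.1 fun _ _ => sqrt_nonneg _)
    _ = clen g γ a b := intervalIntegral.integral_add_adjacent_intervals
        (hspeed.intervalIntegrable a s) (hspeed.intervalIntegrable s b)

lemma mul_norm_sub_le_rdist (hg : Continuous fun p : En n × En n => g p.1 p.2 p.2)
    (hc : 0 ≤ c) (hradial : ∀ x, R ≤ ‖x‖ → ∀ v, c * (⟪x, v⟫ / ‖x‖) ≤ √(g x v v))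
    {x : En n} (hx : ‖x‖ ≤ R) (y : En n) : c * (‖y‖ - R) ≤ rdist g x y := by
  refine le_csInf ⟨_, fun t => x + t • (y - x), by fun_prop, by simp, by simp, rfl⟩ ?_
  rintro _ ⟨γ, hγ, rfl, rfl, rfl⟩
  exact mul_norm_sub_le_clen hg hc hradial hγ zero_le_one hx

end LowerBound

/-! ### The limit -/

namespace IsAsympConicalFinsler

lemma tendsto_integral_radial_div_norm (hg : IsAsympConicalFinsler g α) :
    Tendsto (fun x => (∫ t in (0 : ℝ)..1, √(g (t • x) x x)) / ‖x‖) (cobounded (En n)) (𝓝 1) := by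
  obtain ⟨K, hK⟩ := hg.exists_sqrt_le_mul_norm
  have : (cobounded (En n)).IsCountablyGenerated := by
    rw [← comap_norm_atTop]
    infer_instance
  have hlim : Tendsto (fun x => ∫ t in (0 : ℝ)..1, √(g (t • x) x x) / ‖x‖) (cobounded (En n))
      (𝓝 (∫ _ in (0 : ℝ)..1, 1)) := by
    refine intervalIntegral.tendsto_integral_filter_of_dominated_convergence (fun _ => K) ?_ ?_
      intervalIntegrable_const ?_
    · refine Eventually.of_forall fun x => Continuous.aestronglyMeasurable ?_
      exact (continuous_sqrt_radial hg.continuous x).div_const _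
    · filter_upwards [eventually_cobounded_le_norm 1] with x hx
      refine ae_of_all _ fun t _ => ?_
      rw [Real.norm_of_nonneg (by positivity), div_le_iff₀ (by positivity)]
      exact hK _ _
    · refine ae_of_all _ fun t ht => hg.tendsto_sqrt_radial_div_norm ?_
      exact (uIoc_of_le (zero_le_one' ℝ) ▸ ht).1.ne'
  simpa only [intervalIntegral.integral_div, intervalIntegral.integral_const, sub_zero,
    one_smul] using hlim

lemma eventually_const_lt_rdist_div_norm (hg : IsAsympConicalFinsler g α) (hα : sin α ≠ 0) {a : ℝ}
    (ha : a < 1) : ∀ᶠ x in cobounded (En n), a < rdist g 0 x / ‖x‖ := by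
  obtain ⟨c, hac, hc₁⟩ := exists_between (max_lt ha one_pos)
  obtain ⟨hac, hc₀⟩ := max_lt_iff.1 hac
  obtain ⟨R, -, hR⟩ := hasBasis_cobounded_norm.eventually_iff.1
    (hg.eventually_mul_radial_le_sqrt hα hc₀.le hc₁)
  have hlower (x : En n) : c * (‖x‖ - max R 0) ≤ rdist g 0 x :=
    mul_norm_sub_le_rdist hg.continuous hc₀.le
      (fun y hy => hR ((le_max_left R 0).trans hy)) (by simp) x
  have hlim : Tendsto (fun x : En n => c * (1 - max R 0 / ‖x‖)) (cobounded (En n)) (𝓝 c) := by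
    simpa using ((tendsto_norm_cobounded_atTop.const_div_atTop (max R 0)).const_sub 1).const_mul c
  filter_upwards [hlim.eventually_const_lt hac, eventually_cobounded_le_norm 1] with x hx hx₁
  have hne : ‖x‖ ≠ 0 := by positivity
  calc a < c * (1 - max R 0 / ‖x‖) := hx
    _ = c * (‖x‖ - max R 0) / ‖x‖ := by rw [mul_div_assoc, sub_div, div_self hne]
    _ ≤ rdist g 0 x / ‖x‖ := by gcongr; exact hlower x

lemma tendsto_rdist_div_norm (hg : IsAsympConicalFinsler g α) (hα : sin α ≠ 0) :
    Tendsto (fun x => rdist g 0 x / ‖x‖) (cobounded (En n)) (𝓝 1) := by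
  refine tendsto_order.2
    ⟨fun a ha => hg.eventually_const_lt_rdist_div_norm hα ha, fun a ha => ?_⟩
  filter_upwards [hg.tendsto_integral_radial_div_norm.eventually_lt_const ha] with x hx
  refine lt_of_le_of_lt ?_ hx
  gcongr
  exact rdist_zero_le_integral_radial g x

lemma exists_rdist_zero_le_mul_norm (hg : IsAsympConicalFinsler g α) :
    ∃ K, ∀ x, rdist g 0 x ≤ K * ‖x‖ := by
  obtain ⟨K, hK⟩ := hg.exists_sqrt_le_mul_norm
  refine ⟨K, fun x => (rdist_zero_le_integral_radial g x).trans ?_⟩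
  have hcont := continuous_sqrt_radial hg.continuous x
  simpa using intervalIntegral.integral_mono_on (μ := volume) zero_le_one
    (hcont.intervalIntegrable 0 1) (intervalIntegrable_const (c := K * ‖x‖))
    fun t _ => hK (t • x) x

lemma comap_rdist_zero_atTop_le_cobounded (hg : IsAsympConicalFinsler g α) :
    comap (rdist g 0) atTop ≤ cobounded (En n) := by
  obtain ⟨K, hK⟩ := hg.exists_rdist_zero_le_mul_norm
  have hpos : 0 < max K 1 := lt_max_of_lt_right one_pos
  have hle (x : En n) : rdist g 0 x ≤ max K 1 * ‖x‖ :=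
    (hK x).trans (by gcongr; exact le_max_left K 1)
  rw [← comap_norm_atTop, ← tendsto_iff_comap, ← tendsto_const_mul_atTop_of_pos hpos]
  exact tendsto_atTop_mono hle tendsto_comap

end IsAsympConicalFinsler

theorem statement_10_general (hg : IsAsympConicalFinsler g α) (hα : sin α ≠ 0) :
    Tendsto (fun x => rdist g 0 x / ‖x‖) (cobounded (En n)) (𝓝 1) ∧
      Tendsto (fun x => rdist g 0 x / ‖x‖) (comap (rdist g 0) atTop) (𝓝 1) :=
  have hlim := hg.tendsto_rdist_div_norm hα
  ⟨hlim, hlim.mono_left hg.comap_rdist_zero_atTop_le_cobounded⟩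

end AsympConical

/-- asymptotics of the Riemannian distance to the reference point.
On an asymptotically conical manifold `(ℝⁿ, g)`, `d_g(o,x)/|x| → 1` as `|x| → ∞`;
equivalently `d_g(o,x)/|x| → 1` as `d_g(o,x) → ∞`. -/
theorem statement_10 (n : ℕ) (hn : 2 ≤ n) (g : MetricTensor n) (α μ : ℝ)
    (hα : α ∈ Set.Ioo 0 (π / 2)) (hμ : 0 < μ) (hg : IsAsympConical n g α μ) :
    (∀ ε > (0:ℝ), ∃ R : ℝ, ∀ x : En n, R ≤ ‖x‖ → |rdist g 0 x / ‖x‖ - 1| < ε) ∧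
    (∀ ε > (0:ℝ), ∃ R : ℝ, ∀ x : En n, R ≤ rdist g 0 x → |rdist g 0 x / ‖x‖ - 1| < ε) := by
  simpa only [← comap_norm_atTop, tendsto_comap_atTop_nhds_iff, Real.dist_eq] using
    statement_10_general (hg.isAsympConicalFinsler hμ)
      (sin_pos_of_pos_of_lt_pi hα.1 (hα.2.trans (half_lt_self pi_pos))).ne'
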